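/- For a finite simple graph $G=(V,E)$ and $X\subseteq V$, let $N^\circ_G(X)$ denote the set of vertices outside $X$ that are adjacent to at least one vertex of $X$; a nonempty set $X\subseteq V$ is a connected set of $G$ if the induced subgraph $G[X]$ is connected. A leaf of a tree is a vertex of degree $1$ in the tree, and a subtree of $G$ is a subgraph of $G$ that is a tree. For a connected finite simple graph $G$, let $\ell(G)$ be the maximum number of leaves over all spanning trees of $G$. For every connected finite simple graph $G=(V,E)$ with $|V|\ge 1$, $\ell(G)$ equals the largest number $k$ such that $G$ has a subtree with $k$ leaves. If moreover $|V|\neq 2$, then $\ell(G)$ also equals the maximum of $|N^\circ_G(X)|$ over all connected sets $X$ of $G$. -/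

import Mathlib

/-- The set of leaves of a subgraph `T` of `G` (typically a tree): its vertices of degree 1
in `T`. -/
def leafSet {V : Type*} {G : SimpleGraph V} (T : G.Subgraph) : Set V :=
  {v | v ∈ T.verts ∧ (T.neighborSet v).ncard = 1}

/-- The number of leaves of a subgraph `T` of `G`. -/
noncomputable def leafCount {V : Type*} {G : SimpleGraph V} (T : G.Subgraph) : ℕ :=
  (leafSet T).ncard

/-- For a connected finite graph `G`: the maximum number of leaves over all spanning trees of `G`.
The set below is then nonempty and bounded, so that `sSup` is its maximum. -/
noncomputable def ell {V : Type*} (G : SimpleGraph V) : ℕ :=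
  sSup {k | ∃ T : G.Subgraph, T.IsSpanning ∧ T.coe.IsTree ∧ leafCount T = k}

/-- The closed neighborhood of a vertex. -/
def closedNbhd {V : Type*} (G : SimpleGraph V) (x : V) : Set V :=
  insert x (G.neighborSet x)

/-- The closed neighborhood `N_G(X)` of a set of vertices. -/
def closedNbhdSet {V : Type*} (G : SimpleGraph V) (X : Set V) : Set V :=
  ⋃ x ∈ X, closedNbhd G x

/-- The open neighborhood `N°_G(X) = N_G(X) \ X` of a set of vertices. -/
def openNbhdSet {V : Type*} (G : SimpleGraph V) (X : Set V) : Set V :=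
  closedNbhdSet G X \ X

/-- `X` is a connected set of `G`: it is nonempty and the induced subgraph `G[X]` is connected. -/
def IsConnSet {V : Type*} (G : SimpleGraph V) (X : Set V) : Prop :=
  X.Nonempty ∧ (G.induce X).Connected

open SimpleGraph

section LeafCharacterizations

variable {V : Type*} {G : SimpleGraph V}

/-- If a subgraph, as a graph on its own vertices, is acyclic, so is it as a graph on all
vertices. -/
theorem isAcyclic_spanningCoe {T : G.Subgraph} (h : T.coe.IsAcyclic) :
    T.spanningCoe.IsAcyclic := by
  intro u c hc
  have hsupp : ∀ w ∈ c.support, w ∈ T.verts := by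
    intro w hw
    obtain ⟨e, he, hwe⟩ := (Walk.mem_support_iff_exists_mem_edges_of_not_nil hc.not_nil).1 hw
    obtain ⟨x, rfl⟩ := Sym2.mem_iff_exists.1 hwe
    have hadj : T.Adj w x := c.adj_of_mem_edges he
    exact hadj.fst_mem
  have hind : (T.spanningCoe.induce T.verts).IsAcyclic :=
    h.comap ⟨id, fun {_ _} hab => hab⟩ Function.injective_id
  refine hind (c.induce T.verts hsupp) (Walk.IsCycle.of_map (f := (Embedding.induce _).toHom) ?_)
  rw [Walk.map_induce]
  exact hc

/-- Attaching a pendant edge to a subtree gives a subtree. -/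
theorem isTree_sup_subgraphOfAdj {T : G.Subgraph} (hT : T.coe.IsTree) {u v : V}
    (hu : u ∈ T.verts) (hv : v ∉ T.verts) (h : G.Adj u v) :
    (T ⊔ G.subgraphOfAdj h).coe.IsTree := by
  refine ⟨?_, ?_⟩
  · rw [← Subgraph.connected_iff']
    refine Subgraph.connected_sup ⟨hT.connected.preconnected⟩
      (Subgraph.subgraphOfAdj_connected h).preconnected ⟨u, ?_⟩
    simp [hu]
  · have hreach : ¬ T.spanningCoe.Reachable v u := by
      rintro ⟨p⟩
      cases p with
      | nil => exact hv hu
      | cons hadj _ => exact hv (Subgraph.Adj.fst_mem hadj)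
    have hacyc := (isAcyclic_spanningCoe hT.isAcyclic).sup_edge_of_not_reachable hreach
    refine hacyc.comap ⟨Subtype.val, ?_⟩ Subtype.val_injective
    rintro ⟨a, ha⟩ ⟨b, hb⟩ hab
    have hne := h.ne
    simp only [Subgraph.coe_adj, Subgraph.sup_adj, subgraphOfAdj_adj, Sym2.eq_iff] at hab
    simp only [sup_adj, Subgraph.spanningCoe_adj, edge_adj]
    grind

/-- The new end of a pendant edge is a leaf. -/
theorem mem_leafSet_sup_subgraphOfAdj {T : G.Subgraph} {u v : V} (hv : v ∉ T.verts)
    (h : G.Adj u v) : v ∈ leafSet (T ⊔ G.subgraphOfAdj h) := by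
  refine ⟨by simp, ?_⟩
  rw [Set.ncard_eq_one]
  refine ⟨u, Set.ext fun x => ?_⟩
  have h1 : ¬ T.Adj v x := fun hadj => hv hadj.fst_mem
  have hne := h.ne
  simp only [Subgraph.mem_neighborSet, Subgraph.sup_adj, subgraphOfAdj_adj, Sym2.eq_iff,
    Set.mem_singleton_iff]
  grind

/-- Attaching a pendant edge at `u` destroys no leaf other than `u`. -/
theorem leafSet_subset_leafSet_sup_subgraphOfAdj {T : G.Subgraph} {u v : V} (hv : v ∉ T.verts)
    (h : G.Adj u v) : leafSet T \ {u} ⊆ leafSet (T ⊔ G.subgraphOfAdj h) := by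
  rintro w ⟨⟨hw, hcard⟩, hwu⟩
  refine ⟨Or.inl hw, ?_⟩
  rw [← hcard]
  congr 1
  ext x
  have hwv : w ≠ v := fun hwv => hv (hwv ▸ hw)
  have hwu' : w ≠ u := hwu
  simp only [Subgraph.mem_neighborSet, Subgraph.sup_adj, subgraphOfAdj_adj, Sym2.eq_iff]
  grind

theorem leafCount_le_leafCount_sup_subgraphOfAdj [Finite V] {T : G.Subgraph} {u v : V}
    (hv : v ∉ T.verts) (h : G.Adj u v) :
    leafCount T ≤ leafCount (T ⊔ G.subgraphOfAdj h) := by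
  have hvT : v ∉ leafSet T \ {u} := fun hmem => hv hmem.1.1
  calc leafCount T ≤ (insert u (leafSet T \ {u})).ncard :=
        Set.ncard_le_ncard fun x hx => by by_cases h : x = u <;> simp [h, hx]
    _ ≤ (leafSet T \ {u}).ncard + 1 := Set.ncard_insert_le _ _
    _ = (insert v (leafSet T \ {u})).ncard := (Set.ncard_insert_of_notMem hvT).symm
    _ ≤ leafCount (T ⊔ G.subgraphOfAdj h) := Set.ncard_le_ncard <|
        Set.insert_subset (mem_leafSet_sup_subgraphOfAdj hv h)
          (leafSet_subset_leafSet_sup_subgraphOfAdj hv h)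

/-- Every subtree of a connected finite graph extends to a spanning tree that has at least as
many leaves. -/
theorem exists_isSpanning_isTree_leafCount_le [Finite V] (hG : G.Connected) (T : G.Subgraph)
    (hT : T.coe.IsTree) :
    ∃ T' : G.Subgraph, T'.IsSpanning ∧ T'.coe.IsTree ∧ leafCount T ≤ leafCount T' := by
  induction hn : (T.vertsᶜ).ncard using Nat.strong_induction_on generalizing T with
  | _ n ih =>
    by_cases hspan : T.IsSpanning
    · exact ⟨T, hspan, hT, le_rfl⟩
    obtain ⟨y, hy⟩ : ∃ y, y ∉ T.verts := by simpa [Subgraph.IsSpanning] using hspan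
    obtain ⟨⟨x, hx⟩⟩ := hT.connected.nonempty
    obtain ⟨p⟩ := hG.preconnected x y
    obtain ⟨d, -, hu, hv⟩ := p.exists_boundary_dart T.verts hx hy
    have hlt : ((T ⊔ G.subgraphOfAdj d.adj).vertsᶜ).ncard < n := by
      rw [← hn]
      refine Set.ncard_lt_ncard ⟨?_, fun hsub => ?_⟩
      · exact Set.compl_subset_compl.2 Set.subset_union_left
      · have := hsub hv
        simp at this
    obtain ⟨T', hsp, htree, hle⟩ := ih _ hlt _ (isTree_sup_subgraphOfAdj hT hu hv d.adj) rfl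
    exact ⟨T', hsp, htree, (leafCount_le_leafCount_sup_subgraphOfAdj hv d.adj).trans hle⟩

theorem mem_openNbhdSet_iff {X : Set V} {v : V} :
    v ∈ openNbhdSet G X ↔ v ∉ X ∧ ∃ u ∈ X, G.Adj u v := by
  simp only [openNbhdSet, closedNbhdSet, closedNbhd, Set.mem_sdiff, Set.mem_iUnion,
    Set.mem_insert_iff, mem_neighborSet, exists_prop]
  grind

/-- A connected set carries a subtree. -/
theorem exists_isTree_verts_eq {X : Set V} (hX : (G.induce X).Connected) :
    ∃ T : G.Subgraph, T.coe.IsTree ∧ T.verts = X := by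
  obtain ⟨F, hF, hFtree⟩ := hX.exists_isTree_le
  let T : G.Subgraph :=
    { verts := X
      Adj := fun a b => ∃ (ha : a ∈ X) (hb : b ∈ X), F.Adj ⟨a, ha⟩ ⟨b, hb⟩
      adj_sub := fun ⟨_, _, h⟩ => hF h
      edge_vert := fun ⟨ha, _, _⟩ => ha
      symm := ⟨fun _ _ ⟨ha, hb, h⟩ => ⟨hb, ha, h.symm⟩⟩ }
  have hT : T.coe = F := by
    ext ⟨a, ha⟩ ⟨b, hb⟩
    exact ⟨fun ⟨_, _, h⟩ => h, fun h => ⟨ha, hb, h⟩⟩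
  exact ⟨T, hT ▸ hFtree, rfl⟩

/-- A connected set `X` together with neighbors `S` of `X` carries a subtree in which the members
of `S` are leaves. -/
theorem exists_isTree_subset_leafSet {X S : Set V} (hX : (G.induce X).Connected)
    (hfin : S.Finite) (hS : S ⊆ openNbhdSet G X) :
    ∃ T : G.Subgraph, T.coe.IsTree ∧ T.verts = X ∪ S ∧ S ⊆ leafSet T := by
  induction S, hfin using Set.Finite.induction_on with
  | empty => simpa using exists_isTree_verts_eq hX
  | @insert v S hvS _ ih =>
    obtain ⟨hv, hS⟩ := Set.insert_subset_iff.1 hS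
    obtain ⟨T, hT, hverts, hleaf⟩ := ih hS
    obtain ⟨hvX, u, hu, hadj⟩ := mem_openNbhdSet_iff.1 hv
    have hvT : v ∉ T.verts := by simp [hverts, hvX, hvS]
    have huT : u ∈ T.verts := hverts ▸ Or.inl hu
    refine ⟨_, isTree_sup_subgraphOfAdj hT huT hvT hadj, ?_, Set.insert_subset
      (mem_leafSet_sup_subgraphOfAdj hvT hadj) fun w hw =>
        leafSet_subset_leafSet_sup_subgraphOfAdj hvT hadj ⟨hleaf hw, ?_⟩⟩
    · ext x
      simp only [Subgraph.verts_sup, hverts, subgraphOfAdj_verts, Set.mem_union,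
        Set.mem_insert_iff, Set.mem_singleton_iff]
      grind
    · rintro rfl
      exact (mem_openNbhdSet_iff.1 (hS hw)).1 hu

theorem exists_adj_of_mem_leafSet {T : G.Subgraph} {v : V} (hv : v ∈ leafSet T) :
    ∃ w, T.Adj v w :=
  Set.nonempty_of_ncard_ne_zero (hv.2.trans_ne one_ne_zero)

/-- Inner vertices of a path in a subgraph are not leaves of the subgraph. -/
theorem getVert_notMem_leafSet [Finite V] {T : G.Subgraph} {u v : V} {p : G.Walk u v}
    (hp : p.IsPath) (hpT : p.toSubgraph ≤ T) {i : ℕ} (h0 : i ≠ 0) (hi : i < p.length) :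
    p.getVert i ∉ leafSet T := by
  rintro ⟨-, hcard⟩
  have h2 := hp.ncard_neighborSet_toSubgraph_internal_eq_two h0 hi
  have hle : (p.toSubgraph.neighborSet (p.getVert i)).ncard ≤ _ :=
    Set.ncard_le_ncard (Subgraph.neighborSet_subset_of_subgraph hpT _)
  omega

theorem exists_isPath_toSubgraph_le {T : G.Subgraph} (hT : T.Connected) {u v : V}
    (hu : u ∈ T.verts) (hv : v ∈ T.verts) : ∃ p : G.Walk u v, p.IsPath ∧ p.toSubgraph ≤ T := by
  classical
  obtain ⟨p, hp⟩ := ((Subgraph.connected_iff_forall_exists_walk_subgraph T).1 hT).2 hu hv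
  exact ⟨p.bypass, p.bypass_isPath, Walk.toSubgraph_bypass_le_toSubgraph.trans hp⟩

/-- In a connected subgraph with at least three vertices, the neighbor of a leaf is no leaf. -/
theorem notMem_leafSet_of_adj_leaf [Finite V] {T : G.Subgraph} (hT : T.Connected)
    (hcard : 3 ≤ T.verts.ncard) {v w : V} (hv : v ∈ leafSet T) (hvw : T.Adj v w) :
    w ∉ leafSet T := by
  intro hw
  have hne : ∃ z ∈ T.verts, z ∉ ({v, w} : Set V) := by
    by_contra! hsub
    have h1 := Set.ncard_le_ncard (s := T.verts) (t := {v, w}) hsub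
    have h2 := Set.ncard_insert_le v {w}
    simp only [Set.ncard_singleton] at h2
    omega
  obtain ⟨z, hz, hzvw⟩ := hne
  simp only [Set.mem_insert_iff, Set.mem_singleton_iff, not_or] at hzvw
  obtain ⟨p, hp, hpT⟩ := exists_isPath_toSubgraph_le hT hv.1 hz
  obtain ⟨a, ha⟩ := Set.ncard_eq_one.1 hv.2
  have huniq : ∀ x, T.Adj v x → x = w := by
    intro x hx
    have h1 : x ∈ T.neighborSet v := hx
    have h2 : w ∈ T.neighborSet v := hvw
    rw [ha] at h1 h2
    exact h1.trans h2.symm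
  have hpos : 0 < p.length := by
    rw [Nat.pos_iff_ne_zero]
    exact fun h => hzvw.1 (Walk.eq_of_length_eq_zero h).symm
  have h1 : p.getVert 1 = w := by
    apply huniq
    simpa using hpT.2 (p.toSubgraph_adj_getVert hpos)
  by_cases hlen : 1 < p.length
  · exact getVert_notMem_leafSet hp hpT one_ne_zero hlen (h1 ▸ hw)
  · have : p.length = 1 := by omega
    apply hzvw.2
    rw [← h1, ← this, Walk.getVert_length]

/-- Deleting the leaves of a connected subgraph with at least three vertices leaves a connected
set. -/
theorem isConnSet_verts_diff_leafSet [Finite V] {T : G.Subgraph} (hT : T.Connected)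
    (hcard : 3 ≤ T.verts.ncard) : IsConnSet G (T.verts \ leafSet T) := by
  have hne : (T.verts \ leafSet T).Nonempty := by
    obtain ⟨v, hv⟩ := hT.nonempty
    by_cases hleaf : v ∈ leafSet T
    · obtain ⟨w, hvw⟩ := exists_adj_of_mem_leafSet hleaf
      exact ⟨w, hvw.snd_mem, notMem_leafSet_of_adj_leaf hT hcard hleaf hvw⟩
    · exact ⟨v, hv, hleaf⟩
  refine ⟨hne, ?_⟩
  obtain ⟨u, hu⟩ := hne
  refine induce_connected_of_patches u hu fun {v} hv => ?_
  obtain ⟨p, hp, hpT⟩ := exists_isPath_toSubgraph_le hT hu.1 hv.1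
  refine ⟨{x | x ∈ p.support}, fun x hx => ?_, p.start_mem_support, p.end_mem_support,
    p.connected_induce_support _ _⟩
  refine ⟨hpT.1 (p.mem_verts_toSubgraph.2 hx), ?_⟩
  obtain ⟨i, rfl, hi⟩ := Walk.mem_support_iff_exists_getVert.1 hx
  rcases eq_or_ne i 0 with rfl | h0
  · simpa using hu.2
  rcases hi.eq_or_lt with rfl | hlt
  · simpa using hv.2
  · exact getVert_notMem_leafSet hp hpT h0 hlt

theorem leafSet_subset_openNbhdSet [Finite V] {T : G.Subgraph} (hT : T.Connected)
    (hcard : 3 ≤ T.verts.ncard) : leafSet T ⊆ openNbhdSet G (T.verts \ leafSet T) := by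
  intro v hv
  refine mem_openNbhdSet_iff.2 ⟨fun h => h.2 hv, ?_⟩
  obtain ⟨w, hvw⟩ := exists_adj_of_mem_leafSet hv
  exact ⟨w, ⟨hvw.snd_mem, notMem_leafSet_of_adj_leaf hT hcard hv hvw⟩, hvw.adj_sub.symm⟩

theorem openNbhdSet_eq_leafSet_of_isSpanning [Finite V] {T : G.Subgraph} (hT : T.Connected)
    (hspan : T.IsSpanning) (hcard : 3 ≤ T.verts.ncard) :
    openNbhdSet G (T.verts \ leafSet T) = leafSet T := by
  refine (leafSet_subset_openNbhdSet hT hcard).antisymm' fun v hv => ?_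
  by_contra hleaf
  exact (mem_openNbhdSet_iff.1 hv).1 ⟨hspan v, hleaf⟩

theorem isGreatest_ell [Finite V] (hG : G.Connected) :
    IsGreatest {k | ∃ T : G.Subgraph, T.IsSpanning ∧ T.coe.IsTree ∧ leafCount T = k} (ell G) := by
  have hbdd : BddAbove
      {k | ∃ T : G.Subgraph, T.IsSpanning ∧ T.coe.IsTree ∧ leafCount T = k} := by
    refine ⟨Nat.card V, ?_⟩
    rintro _ ⟨T, -, -, rfl⟩
    exact Set.ncard_le_card _
  refine ⟨Nat.sSup_mem ?_ hbdd, fun k hk => le_csSup hbdd hk⟩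
  obtain ⟨v⟩ := hG.nonempty
  obtain ⟨T, hspan, htree, -⟩ :=
    exists_isSpanning_isTree_leafCount_le hG _ (IsTree.coe_singletonSubgraph G v)
  exact ⟨_, T, hspan, htree, rfl⟩

theorem leafCount_le_ell [Finite V] (hG : G.Connected) {T : G.Subgraph} (hT : T.coe.IsTree) :
    leafCount T ≤ ell G := by
  obtain ⟨T', hspan, htree, hle⟩ := exists_isSpanning_isTree_leafCount_le hG T hT
  exact hle.trans ((isGreatest_ell hG).2 ⟨T', hspan, htree, rfl⟩)

theorem ncard_openNbhdSet_le_ell [Finite V] (hG : G.Connected) {X : Set V}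
    (hX : IsConnSet G X) : (openNbhdSet G X).ncard ≤ ell G := by
  obtain ⟨T, hT, -, hleaf⟩ := exists_isTree_subset_leafSet hX.2 (Set.toFinite _) subset_rfl
  exact (Set.ncard_le_ncard hleaf).trans (leafCount_le_ell hG hT)

theorem leafSet_eq_empty_of_subsingleton [Subsingleton V] (T : G.Subgraph) :
    leafSet T = ∅ := by
  refine Set.eq_empty_of_forall_notMem fun v hv => ?_
  obtain ⟨w, hvw⟩ := exists_adj_of_mem_leafSet hv
  exact hvw.adj_sub.ne (Subsingleton.elim _ _)

end LeafCharacterizations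

/-- For every connected finite simple graph `G`, `ℓ(G)` is the largest number `k` such that `G`
has a subtree with `k` leaves; and, unless `G` is the graph on two vertices, `ℓ(G)` is also the
maximum of `|N°_G(X)|` over the connected sets `X` of `G`. -/
theorem ell_characterizations {V : Type*} [Fintype V] (G : SimpleGraph V) (hG : G.Connected) :
    IsGreatest {k : ℕ | ∃ T : G.Subgraph, T.coe.IsTree ∧ leafCount T = k} (ell G) ∧
    (Fintype.card V ≠ 2 →
      IsGreatest {k : ℕ | ∃ X : Set V, IsConnSet G X ∧ (openNbhdSet G X).ncard = k} (ell G)) := by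
  obtain ⟨T, hspan, htree, hcount⟩ := (isGreatest_ell hG).1
  refine ⟨⟨⟨T, htree, hcount⟩, ?_⟩, fun hcard => ⟨?_, ?_⟩⟩
  · rintro _ ⟨T', hT', rfl⟩
    exact leafCount_le_ell hG hT'
  · have hconn : T.Connected := ⟨htree.connected⟩
    by_cases h3 : 3 ≤ Fintype.card V
    · have h3' : 3 ≤ T.verts.ncard := by
        rwa [Subgraph.isSpanning_iff.1 hspan, Set.ncard_univ, Nat.card_eq_fintype_card]
      refine ⟨_, isConnSet_verts_diff_leafSet hconn h3', ?_⟩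
      rw [openNbhdSet_eq_leafSet_of_isSpanning hconn hspan h3']
      exact hcount
    · have : Subsingleton V := Fintype.card_le_one_iff_subsingleton.1 (by omega)
      refine ⟨T.verts, ⟨hconn.nonempty, hconn.induce_verts⟩, ?_⟩
      have hempty : openNbhdSet G T.verts = ∅ :=
        Set.eq_empty_of_forall_notMem fun v hv => (mem_openNbhdSet_iff.1 hv).1 (hspan v)
      rw [← hcount, leafCount, leafSet_eq_empty_of_subsingleton, hempty]
  · rintro _ ⟨X, hX, rfl⟩
    exact ncard_openNbhdSet_le_ell hG hX
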